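/- Let σ = diag(1,−1) and let u, u¹, u² : ℝ^M → M_2(ℂ) be smooth 2×2-matrix-valued functions, with entries u = (u_{11}, u_{12}; u_{21}, u_{22}). Assume the three equations: (a) ∂_{x_2}u − (∂_{x_1}u)σ + u[σ,u] = [σ,u¹]; (b) ∂_{x_2}u¹ − (∂_{x_1}u¹)σ + u¹[σ,u] = [σ,u²]; (c) ∂_{x_M}u − (∂²_{x_1}u)σ + u( u[σ,u] − 2(∂_{x_1}u)σ ) + (∂_{x_1}u)[σ,u] = −2(∂_{x_1}u¹)σ − u[u¹,σ] + u¹[σ,u] − [σ,u²]. Then, eliminating u¹ and u², the off-diagonal part u^{of} of u (the matrix with entries u_{12}, u_{21} and zero diagonal) satisfies the Davey–Stewartson system: [∂_{x_M}u^{of}, σ] − ∂²_{x_1}u^{of} − ∂²_{x_2}u^{of} − 8 u_{12}u_{21} u^{of} − 4 φ u^{of} = 0, together with ∂²_{x_2}φ − ∂²_{x_1}φ = 4 ∂²_{x_1}( u_{12}u_{21} ), where φ = ∂_{x_1}( u_{11} + u_{22} ). -/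

import Mathlib

open MeasureTheory Finset

/-- Partial derivative in the `k`-th coordinate direction of a complex-valued
function on `ℝ^M`. -/
noncomputable def pd {M : ℕ} (k : Fin M) (f : (Fin M → ℝ) → ℂ) (x : Fin M → ℝ) : ℂ :=
  fderiv ℝ f x (Pi.single k 1)

/-- Entrywise partial derivative in the `k`-th coordinate direction of a
matrix-valued function on `ℝ^M`. -/
noncomputable def mpd {M Q : ℕ} (k : Fin M)
    (f : (Fin M → ℝ) → Matrix (Fin Q) (Fin Q) ℂ) (x : Fin M → ℝ) :
    Matrix (Fin Q) (Fin Q) ℂ :=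
  Matrix.of fun a b => fderiv ℝ (fun y => f y a b) x (Pi.single k 1)

/-!
Write `∂₁`, `∂₂`, `∂_M` for the derivatives in the directions `i`, `j`, `k`, and `ε = ±1` for the
diagonal entries of `σ`. For `a ≠ b`, the `(a, b)` entry of `(b) + (c)` is free of `u²`, and the
`(a, b)` entry of `(a)` gives `2 u¹_ab = (∂₁ + ε ∂₂) u_ab + 2 u_aa u_ab`. Inserting the latter into
the former produces `(∂₁ - ε ∂₂)(∂₁ + ε ∂₂) = ∂₁² - ∂₂²` acting on `u_ab`, and the only remaining
new term `(∂₁ - ε ∂₂) u_aa` equals `-2 u_ab u_ba` by the `(a, a)` entry of `(a)`. Applying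
`∂₁ + ε ∂₂` to this transport equation and adding the cases `ε = 1` and `ε = -1` gives a wave
equation for the trace of `u`, whose `∂₁`-derivative is the equation for `φ`.
-/

section PartialDerivative

variable {N : ℕ} {f g : (Fin N → ℝ) → ℂ}

lemma contDiff_pd {m n : WithTop ℕ∞} (k : Fin N) (hf : ContDiff ℝ n f) (hmn : m + 1 ≤ n) :
    ContDiff ℝ m (pd k f) :=
  (hf.fderiv_right hmn).clm_apply contDiff_const

lemma differentiable_pd (k : Fin N) (hf : ContDiff ℝ 2 f) : Differentiable ℝ (pd k f) :=
  (contDiff_pd k hf (m := 1) (by norm_num)).differentiable one_ne_zero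

lemma pd_add (k : Fin N) (hf : Differentiable ℝ f) (hg : Differentiable ℝ g) :
    pd k (f + g) = pd k f + pd k g := by
  funext x
  simp [pd, fderiv_add (hf x) (hg x)]

lemma pd_mul (k : Fin N) (hf : Differentiable ℝ f) (hg : Differentiable ℝ g) :
    pd k (f * g) = f * pd k g + g * pd k f := by
  funext x
  simp [pd, fderiv_mul (hf x) (hg x)]

lemma pd_const_smul (k : Fin N) (c : ℂ) (f : (Fin N → ℝ) → ℂ) :
    pd k (c • f) = c • pd k f := by
  funext x
  simp [pd, fderiv_const_smul_field]

lemma pd_const (k : Fin N) (c : ℂ) : (pd k fun _ => c) = fun _ => 0 := by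
  funext x
  simp [pd]

lemma pd_pd_eq_fderiv_fderiv (i j : Fin N) (hf : ContDiff ℝ 2 f) (x : Fin N → ℝ) :
    pd i (pd j f) x = fderiv ℝ (fderiv ℝ f) x (Pi.single i 1) (Pi.single j 1) := by
  have hf' : Differentiable ℝ (fderiv ℝ f) :=
    (hf.fderiv_right (m := 1) (by norm_num)).differentiable one_ne_zero
  unfold pd
  rw [fderiv_clm_apply (hf' x) (differentiableAt_const _)]
  simp

lemma pd_comm (i j : Fin N) (hf : ContDiff ℝ 2 f) : pd i (pd j f) = pd j (pd i f) := by
  funext x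
  rw [pd_pd_eq_fderiv_fderiv i j hf, pd_pd_eq_fderiv_fderiv j i hf]
  exact hf.contDiffAt.isSymmSndFDerivAt (by simp) _ _

end PartialDerivative

section ScalarEquations

variable {N : ℕ} {i j : Fin N} {ε : ℂ} {f g p q w v : (Fin N → ℝ) → ℂ}

lemma pd_pd_eq_of_transport (hε : ε * ε = 1) (hf : ContDiff ℝ 2 f) (hw : Differentiable ℝ w)
    (h : pd j f = ε • (pd i f + w)) :
    pd j (pd j f) = pd i (pd i f) + pd i w + ε • pd j w := by
  have hdf : Differentiable ℝ (pd i f) := differentiable_pd i hf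
  calc pd j (pd j f) = ε • (pd i (pd j f) + pd j w) := by
        rw [pd_comm i j hf, ← pd_add j hdf hw, ← pd_const_smul, ← h]
    _ = ε • (ε • (pd i (pd i f) + pd i w) + pd j w) := by
        rw [h, pd_const_smul, pd_add i hdf hw]
    _ = pd i (pd i f) + pd i w + ε • pd j w := by
        rw [smul_add, smul_smul, hε, one_smul]

lemma wave_of_transport (hε : ε * ε = 1) (hf : ContDiff ℝ 2 f) (hg : ContDiff ℝ 2 g)
    (hw : Differentiable ℝ w) (hfw : pd j f = ε • (pd i f + w))
    (hgw : pd j g = -ε • (pd i g + w)) :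
    pd j (pd j (f + g)) = pd i (pd i (f + g)) + (2 : ℂ) • pd i w := by
  have pd_pd_add : ∀ l, pd l (pd l (f + g)) = pd l (pd l f) + pd l (pd l g) := fun l => by
    rw [pd_add l (hf.differentiable two_ne_zero) (hg.differentiable two_ne_zero),
      pd_add l (differentiable_pd l hf) (differentiable_pd l hg)]
  rw [pd_pd_add, pd_pd_add, pd_pd_eq_of_transport hε hf hw hfw,
    pd_pd_eq_of_transport (by rw [neg_mul_neg, hε]) hg hw hgw]
  module

lemma pd_of_two_smul_eq (k : Fin N) (hp : Differentiable ℝ p) (hq : ContDiff ℝ 2 q)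
    (hv : (2 : ℂ) • v = ε • pd j q + pd i q + (2 : ℂ) • (p * q)) :
    (2 : ℂ) • pd k v =
      ε • pd k (pd j q) + pd k (pd i q) + (2 : ℂ) • (p * pd k q + q * pd k p) := by
  have hq' : Differentiable ℝ q := hq.differentiable two_ne_zero
  have hdq : ∀ l, Differentiable ℝ (pd l q) := fun l => differentiable_pd l hq
  rw [← pd_const_smul, hv, pd_add k (((hdq j).const_smul ε).add (hdq i))
    ((hp.mul hq').const_smul (2 : ℂ)), pd_add k ((hdq j).const_smul ε) (hdq i), pd_const_smul,
    pd_const_smul, pd_mul k hp hq']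

lemma two_mul_pd_sub_pd_of_two_smul_eq (hε : ε * ε = 1) (hp : Differentiable ℝ p)
    (hq : ContDiff ℝ 2 q) (hpw : pd j p = ε • (pd i p + w))
    (hv : (2 : ℂ) • v = ε • pd j q + pd i q + (2 : ℂ) • (p * q)) (x : Fin N → ℝ) :
    2 * (pd i v x - ε * pd j v x + 2 * p x * v x) =
      pd i (pd i q) x - pd j (pd j q) x + 4 * p x * pd i q x - 2 * w x * q x
        + 4 * p x ^ 2 * q x := by
  have hpwx := congrFun hpw x
  have hvx := congrFun hv x
  have hvi := congrFun (pd_of_two_smul_eq i hp hq hv) x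
  have hvj := congrFun (pd_of_two_smul_eq j hp hq hv) x
  have hcomm := congrFun (pd_comm i j hq) x
  simp only [Pi.add_apply, Pi.smul_apply, Pi.mul_apply, smul_eq_mul] at hpwx hvx hvi hvj
  linear_combination hvi - ε * hvj + 2 * p x * hvx + ε * hcomm - 2 * ε * q x * hpwx
    - (pd j (pd j q) x + 2 * q x * (pd i p x + w x)) * hε

end ScalarEquations

section DressedSystem

/-- The dressing equation `∂_j f - (∂_i f) σ + f [σ, u] = [σ, g]`, which expresses the next
coefficient `g` through the coefficient `f`. Equation (a) is the case `f = u`, `g = u1` and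
equation (b) is the case `f = u1`, `g = u2`. -/
def DressingEquation {N Q : ℕ} (i j : Fin N) (σ : Matrix (Fin Q) (Fin Q) ℂ)
    (u f g : (Fin N → ℝ) → Matrix (Fin Q) (Fin Q) ℂ) : Prop :=
  ∀ x, mpd j f x - mpd i f x * σ + f x * (σ * u x - u x * σ) = σ * g x - g x * σ

/-- Equation (c), the evolution of `u` in the direction `k`, driven by the coefficients `u1`
and `u2`. -/
def FlowEquation {N Q : ℕ} (i k : Fin N) (σ : Matrix (Fin Q) (Fin Q) ℂ)
    (u u1 u2 : (Fin N → ℝ) → Matrix (Fin Q) (Fin Q) ℂ) : Prop :=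
  ∀ x, mpd k u x - mpd i (mpd i u) x * σ
      + u x * (u x * (σ * u x - u x * σ) - (2 : ℂ) • (mpd i u x * σ))
      + mpd i u x * (σ * u x - u x * σ)
    = -(2 : ℂ) • (mpd i u1 x * σ) - u x * (u1 x * σ - σ * u1 x)
      + u1 x * (σ * u x - u x * σ) - (σ * u2 x - u2 x * σ)

variable {N : ℕ} {i j k : Fin N} {d : Fin 2 → ℂ}
  {u u1 u2 : (Fin N → ℝ) → Matrix (Fin 2) (Fin 2) ℂ} {a b : Fin 2}

lemma mpd_apply {Q : ℕ} (k : Fin N) (f : (Fin N → ℝ) → Matrix (Fin Q) (Fin Q) ℂ)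
    (x : Fin N → ℝ) (a b : Fin Q) : mpd k f x a b = pd k (f · a b) x := rfl

lemma fin_two_mul_apply_of_ne {R : Type*} [NonUnitalNonAssocSemiring R] (hab : a ≠ b)
    (A B : Matrix (Fin 2) (Fin 2) R) (r c : Fin 2) :
    (A * B) r c = A r a * B a c + A r b * B b c := by
  rw [Matrix.mul_apply, Fintype.sum_eq_add a b hab (by lia)]

lemma pd_diag_entry (hab : a ≠ b) (hdb : d b = -d a)
    (ha : DressingEquation i j (Matrix.diagonal d) u u u1) :
    pd j (u · a a) = d a • (pd i (u · a a) + (2 : ℂ) • ((u · a b) * (u · b a))) := by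
  funext x
  have h := congrFun₂ (ha x) a a
  simp only [Matrix.add_apply, Matrix.sub_apply, fin_two_mul_apply_of_ne hab,
    Matrix.diagonal_apply_eq, Matrix.diagonal_apply_ne _ hab,
    Matrix.diagonal_apply_ne _ hab.symm, mpd_apply, hdb] at h
  simp only [Pi.add_apply, Pi.smul_apply, Pi.mul_apply, smul_eq_mul]
  linear_combination h

lemma two_smul_offDiag_entry (hab : a ≠ b) (hda : d a * d a = 1) (hdb : d b = -d a)
    (ha : DressingEquation i j (Matrix.diagonal d) u u u1) :
    (2 : ℂ) • (u1 · a b) =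
      d a • pd j (u · a b) + pd i (u · a b) + (2 : ℂ) • ((u · a a) * (u · a b)) := by
  funext x
  have h := congrFun₂ (ha x) a b
  simp only [Matrix.add_apply, Matrix.sub_apply, fin_two_mul_apply_of_ne hab,
    Matrix.diagonal_apply_eq, Matrix.diagonal_apply_ne _ hab,
    Matrix.diagonal_apply_ne _ hab.symm, mpd_apply, hdb] at h
  simp only [Pi.add_apply, Pi.smul_apply, Pi.mul_apply, smul_eq_mul]
  linear_combination -d a * h
    + (pd i (u · a b) x + 2 * u x a a * u x a b - 2 * u1 x a b) * hda

lemma flow_offDiag_entry (hab : a ≠ b) (hda : d a * d a = 1) (hdb : d b = -d a)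
    (hb : DressingEquation i j (Matrix.diagonal d) u u1 u2)
    (hc : FlowEquation i k (Matrix.diagonal d) u u1 u2) (x : Fin N → ℝ) :
    d a * pd k (u · a b) x + pd i (pd i (u · a b)) x + 2 * u x a a ^ 2 * u x a b
        + 2 * u x a a * pd i (u · a b) x + 2 * u x a b ^ 2 * u x b a
        + 2 * (pd i (u · a a) x + pd i (u · b b) x) * u x a b
      = pd i (u1 · a b) x - d a * pd j (u1 · a b) x + 2 * u x a a * u1 x a b := by
  have h := congrArg₂ (· + ·) (congrFun₂ (hb x) a b) (congrFun₂ (hc x) a b)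
  simp only [Matrix.add_apply, Matrix.sub_apply, Matrix.smul_apply, fin_two_mul_apply_of_ne hab,
    Matrix.diagonal_apply_eq, Matrix.diagonal_apply_ne _ hab,
    Matrix.diagonal_apply_ne _ hab.symm, mpd_apply, smul_eq_mul, hdb] at h
  linear_combination d a * h - (pd i (pd i (u · a b)) x + 2 * u x a a ^ 2 * u x a b
    + 2 * u x a a * pd i (u · a b) x + 2 * u x a b ^ 2 * u x b a
    + 2 * (pd i (u · a a) x + pd i (u · b b) x) * u x a b
    - pd i (u1 · a b) x - 2 * u x a a * u1 x a b) * hda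

lemma davey_stewartson_entry (hab : a ≠ b) (hda : d a * d a = 1) (hdb : d b = -d a)
    (hp : Differentiable ℝ (u · a a)) (hq : ContDiff ℝ 2 (u · a b))
    (ha : DressingEquation i j (Matrix.diagonal d) u u u1)
    (hb : DressingEquation i j (Matrix.diagonal d) u u1 u2)
    (hc : FlowEquation i k (Matrix.diagonal d) u u1 u2) (x : Fin N → ℝ) :
    2 * d a * pd k (u · a b) x + pd i (pd i (u · a b)) x + pd j (pd j (u · a b)) x
      + 8 * (u x a b * u x b a) * u x a b
      + 4 * (pd i (u · a a) x + pd i (u · b b) x) * u x a b = 0 := by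
  have eliminate_u1 := two_mul_pd_sub_pd_of_two_smul_eq hda hp hq (pd_diag_entry hab hdb ha)
    (two_smul_offDiag_entry hab hda hdb ha) x
  have eliminate_u2 := flow_offDiag_entry hab hda hdb hb hc x
  simp only [Pi.smul_apply, Pi.mul_apply, smul_eq_mul] at eliminate_u1
  linear_combination 2 * eliminate_u2 + eliminate_u1

lemma wave_pd_trace (hab : a ≠ b) (hda : d a * d a = 1) (hdb : d b = -d a)
    (hu : ∀ r c, ContDiff ℝ 3 (u · r c)) (ha : DressingEquation i j (Matrix.diagonal d) u u u1) :
    pd j (pd j (pd i ((u · a a) + (u · b b)))) =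
      pd i (pd i (pd i ((u · a a) + (u · b b))))
        + (4 : ℂ) • pd i (pd i ((u · a b) * (u · b a))) := by
  set τ := (u · a a) + (u · b b)
  set w := (u · a b) * (u · b a) with hw_def
  have hτ : ContDiff ℝ 3 τ := (hu a a).add (hu b b)
  have hw : ContDiff ℝ 3 w := (hu a b).mul (hu b a)
  have two_le : (2 : WithTop ℕ∞) ≤ 3 := by norm_num
  have two_add : (2 : WithTop ℕ∞) + 1 ≤ 3 := by norm_num
  have hpd : ∀ {f : (Fin N → ℝ) → ℂ} (l : Fin N), ContDiff ℝ 3 f → ContDiff ℝ 2 (pd l f) :=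
    fun l hf => contDiff_pd l hf two_add
  have transport_b : pd j (u · b b) = -d a • (pd i (u · b b) + (2 : ℂ) • w) := by
    rw [pd_diag_entry hab.symm (by rw [hdb, neg_neg]) ha, hdb, hw_def, mul_comm (u · a b)]
  have trace_wave : pd j (pd j τ) = pd i (pd i τ) + (2 : ℂ) • pd i ((2 : ℂ) • w) :=
    wave_of_transport hda ((hu a a).of_le two_le) ((hu b b).of_le two_le)
      ((hw.differentiable three_ne_zero).const_smul (2 : ℂ)) (pd_diag_entry hab hdb ha) transport_b
  have hdiτ : Differentiable ℝ (pd i (pd i τ)) := differentiable_pd i (hpd i hτ)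
  have hdiw : Differentiable ℝ ((4 : ℂ) • pd i w) :=
    ((hpd i hw).differentiable two_ne_zero).const_smul (4 : ℂ)
  calc pd j (pd j (pd i τ)) = pd i (pd j (pd j τ)) := by
        rw [pd_comm j i (hτ.of_le two_le), pd_comm j i (hpd j hτ)]
    _ = pd i (pd i (pd i τ) + (4 : ℂ) • pd i w) := by
        rw [trace_wave, pd_const_smul, smul_smul]; norm_num
    _ = pd i (pd i (pd i τ)) + (4 : ℂ) • pd i (pd i w) := by
        rw [pd_add i hdiτ hdiw, pd_const_smul]

end DressedSystem

theorem stmt18_general {N : ℕ} (i j k : Fin N)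
    (σ : Matrix (Fin 2) (Fin 2) ℂ) (hσ : σ = Matrix.diagonal ![1, -1])
    (u u1 u2 : (Fin N → ℝ) → Matrix (Fin 2) (Fin 2) ℂ)
    (hu : ∀ a b, ContDiff ℝ 3 fun x => u x a b)
    (ha : DressingEquation i j σ u u u1) (hb : DressingEquation i j σ u u1 u2)
    (hc : FlowEquation i k σ u u1 u2)
    (uof : (Fin N → ℝ) → Matrix (Fin 2) (Fin 2) ℂ)
    (huof : ∀ x, uof x = Matrix.of ![![0, u x 0 1], ![u x 1 0, 0]])
    (φ : (Fin N → ℝ) → ℂ)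
    (hφ : φ = fun x => pd i (fun y => u y 0 0 + u y 1 1) x) :
    (∀ x, mpd k uof x * σ - σ * mpd k uof x
        - mpd i (mpd i uof) x - mpd j (mpd j uof) x
        - (8 * u x 0 1 * u x 1 0) • uof x - (4 * φ x) • uof x = 0) ∧
    (∀ x, pd j (pd j φ) x - pd i (pd i φ) x
        = 4 * pd i (pd i (fun y => u y 0 1 * u y 1 0)) x) := by
  subst hσ
  have hu2 : ∀ a b, ContDiff ℝ 2 (u · a b) := fun a b => (hu a b).of_le (by norm_num)
  have hu1 : ∀ a b, Differentiable ℝ (u · a b) := fun a b => (hu2 a b).differentiable two_ne_zero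
  have hφ_trace : φ = pd i ((u · 0 0) + (u · 1 1)) := hφ
  refine ⟨fun x => ?_, fun x => ?_⟩
  · obtain rfl : uof = fun x => Matrix.of ![![0, u x 0 1], ![u x 1 0, 0]] := funext huof
    have hφx : φ x = pd i (u · 0 0) x + pd i (u · 1 1) x := by
      rw [hφ_trace, pd_add i (hu1 0 0) (hu1 1 1), Pi.add_apply]
    have entry (a b : Fin 2) (hab : a ≠ b) (hda : ![1, -1] a * ![1, -1] a = (1 : ℂ))
        (hdb : ![1, -1] b = -(![1, -1] a : ℂ)) :=
      davey_stewartson_entry hab hda hdb (hu1 a a) (hu2 a b) ha hb hc x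
    have entry01 := entry 0 1 (by simp) (by simp) (by simp)
    have entry10 := entry 1 0 (by simp) (by simp) (by simp)
    simp only [Matrix.cons_val_zero, Matrix.cons_val_one] at entry01 entry10
    ext a b
    simp only [Matrix.sub_apply, Matrix.mul_diagonal, Matrix.diagonal_mul, Matrix.smul_apply,
      Matrix.zero_apply, smul_eq_mul, mpd_apply, hφx]
    match a, b with
    | 0, 0 | 1, 1 => simp [pd_const]
    | 0, 1 =>
      simp only [Matrix.of_apply, Matrix.cons_val_zero, Matrix.cons_val_one]
      linear_combination -entry01
    | 1, 0 =>
      simp only [Matrix.of_apply, Matrix.cons_val_zero, Matrix.cons_val_one]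
      linear_combination -entry10
  · have wave := congrFun (wave_pd_trace (a := 0) (b := 1) (by simp) (by simp) (by simp) hu ha) x
    rw [hφ_trace, sub_eq_iff_eq_add']
    exact wave

/-- the classical reduction of the dressed system to the
(2+1)-dimensional Davey–Stewartson equation.  Coordinates are indexed by
`Fin (M+3)` (index `0` is `x_1`, index `1` is `x_2`, index `Fin.last (M+2)` is
`x_M`, dimension at least 3); `σ = B² = diag(1,−1)`. -/
theorem stmt18 {M : ℕ}
    (σ : Matrix (Fin 2) (Fin 2) ℂ) (hσ : σ = Matrix.diagonal ![1, -1])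
    (u u1 u2 : (Fin (M + 3) → ℝ) → Matrix (Fin 2) (Fin 2) ℂ)
    (hus : ∀ a b, ContDiff ℝ (⊤ : ℕ∞) fun x => u x a b)
    (hu1s : ∀ a b, ContDiff ℝ (⊤ : ℕ∞) fun x => u1 x a b)
    (hu2s : ∀ a b, ContDiff ℝ (⊤ : ℕ∞) fun x => u2 x a b)
    -- (a)
    (ha : ∀ x, mpd 1 u x - mpd 0 u x * σ + u x * (σ * u x - u x * σ)
        = σ * u1 x - u1 x * σ)
    -- (b)
    (hb : ∀ x, mpd 1 u1 x - mpd 0 u1 x * σ + u1 x * (σ * u x - u x * σ)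
        = σ * u2 x - u2 x * σ)
    -- (c)
    (hc : ∀ x, mpd (Fin.last (M + 2)) u x - mpd 0 (mpd 0 u) x * σ
          + u x * (u x * (σ * u x - u x * σ) - (2 : ℂ) • (mpd 0 u x * σ))
          + mpd 0 u x * (σ * u x - u x * σ)
        = -(2 : ℂ) • (mpd 0 u1 x * σ) - u x * (u1 x * σ - σ * u1 x)
          + u1 x * (σ * u x - u x * σ) - (σ * u2 x - u2 x * σ))
    -- the off-diagonal part of u and the auxiliary potential φ
    (uof : (Fin (M + 3) → ℝ) → Matrix (Fin 2) (Fin 2) ℂ)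
    (huof : ∀ x, uof x = Matrix.of ![![0, u x 0 1], ![u x 1 0, 0]])
    (φ : (Fin (M + 3) → ℝ) → ℂ)
    (hφ : φ = fun x => pd 0 (fun y => u y 0 0 + u y 1 1) x) :
    -- the Davey–Stewartson system
    (∀ x, mpd (Fin.last (M + 2)) uof x * σ - σ * mpd (Fin.last (M + 2)) uof x
        - mpd 0 (mpd 0 uof) x - mpd 1 (mpd 1 uof) x
        - (8 * u x 0 1 * u x 1 0) • uof x - (4 * φ x) • uof x = 0) ∧
    (∀ x, pd 1 (pd 1 φ) x - pd 0 (pd 0 φ) x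
        = 4 * pd 0 (pd 0 (fun y => u y 0 1 * u y 1 0)) x) := by
  exact stmt18_general 0 1 (Fin.last (M + 2)) σ hσ u u1 u2
    (fun a b => contDiff_infty.1 (hus a b) 3) ha hb hc uof huof φ hφ
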